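/- If β is a non-isotropic imaginary root (i.e. p(β) > 1) belonging to Σ_λ, then every positive integer multiple mβ (m ≥ 1) also belongs to Σ_λ. -/

import Mathlib

open scoped BigOperators

noncomputable section

/-- A quiver with a finite vertex set `I` and a finite arrow set `A`;
`h a` and `t a` are the head and the tail of the arrow `a`. -/
structure FinQuiver where
  I : Type
  [fintypeI : Fintype I]
  [decEqI : DecidableEq I]
  A : Type
  [fintypeA : Fintype A]
  h : A → I
  t : A → I

attribute [instance] FinQuiver.fintypeI FinQuiver.decEqI FinQuiver.fintypeA

namespace FinQuiver

variable (Q : FinQuiver)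

/-- Arrows of the double quiver `Q̄` : every arrow `a : i → j` of `Q` (as `Sum.inl a`)
together with a reverse arrow `a* : j → i` (as `Sum.inr a`). -/
@[reducible] def DA : Type := Q.A ⊕ Q.A

instance : Fintype Q.DA := inferInstanceAs (Fintype (Q.A ⊕ Q.A))

/-- Head of an arrow of the double quiver. -/
@[reducible] def dh : Q.DA → Q.I := fun a => match a with
  | Sum.inl a => Q.h a
  | Sum.inr a => Q.t a

/-- Tail of an arrow of the double quiver. -/
@[reducible] def dt : Q.DA → Q.I := fun a => match a with
  | Sum.inl a => Q.t a
  | Sum.inr a => Q.h a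

/-- The symmetric bilinear form
`(α,β) = ∑_{i∈I} 2 α_i β_i − ∑_{a∈Q̄} α_{h(a)} β_{t(a)}` on `ℤ^I`. -/
def bil (α β : Q.I → ℤ) : ℤ :=
  (∑ i, 2 * α i * β i) - ∑ a : Q.DA, α (Q.dh a) * β (Q.dt a)

/-- `p(α) = 1 − q(α) = 1 − α·α + ∑_{a ∈ Q} α_{t(a)} α_{h(a)}`. -/
def pp (α : Q.I → ℤ) : ℤ :=
  1 - (∑ i, α i * α i) + ∑ a : Q.A, α (Q.t a) * α (Q.h a)

/-- The coordinate vector `ε_i` at a vertex `i`. -/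
def ev (i : Q.I) : Q.I → ℤ := fun j => if j = i then 1 else 0

/-- The coordinate vector of a vertex, as a vector of natural numbers. -/
def evN (i : Q.I) : Q.I → ℕ := fun j => if j = i then 1 else 0

/-- A vertex is loopfree if no arrow has both its head and its tail there. -/
def Loopfree (i : Q.I) : Prop := ∀ a : Q.A, ¬ (Q.h a = i ∧ Q.t a = i)

/-- The reflection `s_i(α) = α − (α,ε_i) ε_i` at a (loopfree) vertex `i`. -/
def refl (i : Q.I) (α : Q.I → ℤ) : Q.I → ℤ := α - Q.bil α (Q.ev i) • Q.ev i

/-- Two vertices are joined by some arrow. -/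
def Adj (i j : Q.I) : Prop :=
  ∃ a : Q.A, (Q.h a = i ∧ Q.t a = j) ∨ (Q.h a = j ∧ Q.t a = i)

/-- The quiver is connected. -/
def Connected : Prop := ∀ i j : Q.I, Relation.ReflTransGen Q.Adj i j

/-- The support of the vector `α` is connected in `Q`. -/
def SuppConnected (α : Q.I → ℤ) : Prop :=
  ∀ i j : Q.I, α i ≠ 0 → α j ≠ 0 →
    Relation.ReflTransGen (fun x y => α x ≠ 0 ∧ α y ≠ 0 ∧ Q.Adj x y) i j

/-- The fundamental region: nonzero nonnegative vectors with connected support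
such that `(α, ε_i) ≤ 0` for every vertex `i`. -/
def InFund (α : Q.I → ℤ) : Prop :=
  α ≠ 0 ∧ (∀ i, 0 ≤ α i) ∧ Q.SuppConnected α ∧ ∀ i, Q.bil α (Q.ev i) ≤ 0

/-- The roots of the Kac root system attached to `Q` : the real roots form the orbit
of the simple roots (coordinate vectors at loopfree vertices) under the reflections at
loopfree vertices, and the imaginary roots form the orbit of `±(fundamental region)`
under these reflections. -/
inductive IsRoot : (Q.I → ℤ) → Prop
  | simple (i : Q.I) (hi : Q.Loopfree i) : IsRoot (Q.ev i)
  | fund (α : Q.I → ℤ) (hα : Q.InFund α) : IsRoot α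
  | neg_fund (α : Q.I → ℤ) (hα : Q.InFund α) : IsRoot (-α)
  | reflect (i : Q.I) (hi : Q.Loopfree i) (α : Q.I → ℤ) (hα : IsRoot α) :
      IsRoot (Q.refl i α)

/-- Positive roots: roots all of whose components are nonnegative. -/
def IsPosRoot (α : Q.I → ℤ) : Prop := Q.IsRoot α ∧ (∀ i, 0 ≤ α i) ∧ α ≠ 0

/-- The Tits form is positive semidefinite. -/
def PosSemidef : Prop := ∀ α : Q.I → ℤ, 0 ≤ Q.bil α α

/-- The Tits form is positive definite. -/
def PosDef : Prop := Q.PosSemidef ∧ ∀ α : Q.I → ℤ, Q.bil α α = 0 → α = 0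

/-- Dynkin quivers: connected, with positive definite Tits form. -/
def IsDynkin : Prop := Q.Connected ∧ Q.PosDef

/-- Extended Dynkin quivers: connected, with positive semidefinite but not
positive definite Tits form. -/
def IsExtDynkin : Prop := Q.Connected ∧ Q.PosSemidef ∧ ¬ Q.PosDef

/-- `δ` is the minimal positive imaginary root of an extended Dynkin quiver:
the minimal nonzero nonnegative vector in the radical of the Tits form. -/
def IsMinImag (δ : Q.I → ℤ) : Prop :=
  (∀ i, 0 ≤ δ i) ∧ δ ≠ 0 ∧ (∀ i, Q.bil δ (Q.ev i) = 0) ∧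
    ∀ β : Q.I → ℤ, (∀ i, 0 ≤ β i) → β ≠ 0 → (∀ i, Q.bil β (Q.ev i) = 0) →
      ∀ i, δ i ≤ β i

/-- The subquiver of `Q` on a subset `S` of vertices and a subset `B` of arrows. -/
def restrict (S : Set Q.I) (B : Set Q.A) (hh : ∀ a ∈ B, Q.h a ∈ S)
    (ht : ∀ a ∈ B, Q.t a ∈ S) : FinQuiver :=
  { I := S
    fintypeI := Fintype.ofFinite S
    decEqI := Classical.decEq _
    A := B
    fintypeA := Fintype.ofFinite B
    h := fun a => ⟨Q.h a.1, hh a.1 a.2⟩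
    t := fun a => ⟨Q.t a.1, ht a.1 a.2⟩ }

/-- The support quiver of a vector: the full subquiver on the support of `β`. -/
def suppQuiver (β : Q.I → ℤ) : FinQuiver :=
  Q.restrict {i | β i ≠ 0} {a | β (Q.h a) ≠ 0 ∧ β (Q.t a) ≠ 0}
    (fun _ ha => ha.1) (fun _ ha => ha.2)

/-- A dimension vector (of natural numbers), viewed in `ℤ^I`. -/
def toZ (α : Q.I → ℕ) : Q.I → ℤ := fun i => (α i : ℤ)

/-- An oriented cycle in the double quiver `Q̄`, consisting of `n+1` arrows,
the tail of each arrow being the head of the (cyclically) next one. -/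
structure Cyc (Q' : FinQuiver) where
  n : ℕ
  ar : Fin (n + 1) → Q'.DA
  compat : ∀ i : Fin (n + 1), Q'.dt (ar i) = Q'.dh (ar (i + 1))

section WithField

variable (K : Type) [Field K]

/-- `λ·α = ∑_i λ_i α_i`. -/
def pair (l : Q.I → K) (α : Q.I → ℤ) : K := ∑ i, l i * (α i : K)

/-- `R_λ^+`, the set of positive roots `α` with `λ·α = 0`. -/
def Rplus (l : Q.I → K) : Set (Q.I → ℤ) :=
  {α | Q.IsPosRoot α ∧ Q.pair K l α = 0}

/-- `ℕ R_λ^+`, the set of sums (including the empty sum `0`) of elements of `R_λ^+`. -/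
def NRplus (l : Q.I → K) : Set (Q.I → ℤ) :=
  (AddSubmonoid.closure (Q.Rplus K l) : AddSubmonoid (Q.I → ℤ))

/-- `Σ_λ` : the elements `α ∈ R_λ^+` with `p(α) > ∑ p(β⁽ᵗ⁾)` for every decomposition
of `α` as a sum of at least two elements `β⁽ᵗ⁾` of `R_λ^+`. -/
def SigmaSet (l : Q.I → K) : Set (Q.I → ℤ) :=
  {α | α ∈ Q.Rplus K l ∧
    ∀ (n : ℕ) (β : Fin n → (Q.I → ℤ)), 2 ≤ n → (∀ j, β j ∈ Q.Rplus K l) →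
      α = ∑ j, β j → (∑ j, Q.pp (β j)) < Q.pp α}

/-- The dual reflection `r_i(λ)_j = λ_j − (ε_i,ε_j) λ_i`. -/
def coRefl (i : Q.I) (l : Q.I → K) : Q.I → K :=
  fun j => l j - (Q.bil (Q.ev i) (Q.ev j) : ℤ) * l i

/-- A single admissible reflection applied to the pair `(λ, α)`:
a reflection at a loopfree vertex `i` with `λ_i ≠ 0`. -/
def AdmStep (x y : (Q.I → K) × (Q.I → ℤ)) : Prop :=
  ∃ i : Q.I, Q.Loopfree i ∧ x.1 i ≠ 0 ∧ y.1 = Q.coRefl K i x.1 ∧ y.2 = Q.refl i x.2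

/-- `(ν,β)` is obtained from `(λ,α)` by a sequence of admissible reflections:
the two pairs lie in the same class of the equivalence relation generated by
admissible reflections. -/
def AdmEquiv (x y : (Q.I → K) × (Q.I → ℤ)) : Prop :=
  Relation.EqvGen (Q.AdmStep K) x y

/-- The space `Rep(Q̄,α)` of representations of the double quiver. -/
def Rep (α : Q.I → ℕ) : Type :=
  ∀ a : Q.DA, Matrix (Fin (α (Q.dh a))) (Fin (α (Q.dt a))) K

/-- The moment map
`μ_α(x)_i = ∑_{a∈Q, h(a)=i} x_a x_{a*} − ∑_{a∈Q, t(a)=i} x_{a*} x_a`. -/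
def moment (α : Q.I → ℕ) (x : Q.Rep K α) (i : Q.I) :
    Matrix (Fin (α i)) (Fin (α i)) K :=
  (∑ a : Q.A, if h : Q.h a = i then
      (x (Sum.inl a) * x (Sum.inr a)).submatrix
        (Fin.cast (congrArg α h).symm) (Fin.cast (congrArg α h).symm)
    else 0)
  - ∑ a : Q.A, if h : Q.t a = i then
      (x (Sum.inr a) * x (Sum.inl a)).submatrix
        (Fin.cast (congrArg α h).symm) (Fin.cast (congrArg α h).symm)
    else 0

/-- The fibre `μ_α^{-1}(λ)` of the moment map over (the central element
corresponding to) `λ`. -/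
def MomentFiber (l : Q.I → K) (α : Q.I → ℕ) : Set (Q.Rep K α) :=
  {x | ∀ i : Q.I, Q.moment K α x i = l i • (1 : Matrix (Fin (α i)) (Fin (α i)) K)}

/-- The group `∏_i GL(α_i,K)`; it acts on `Rep(Q̄,α)` by conjugation, with the same
orbits and the same invariant functions as `G(α) = (∏_i GL(α_i,K))/K^*`. -/
def Gl (α : Q.I → ℕ) : Type := ∀ i : Q.I, Matrix.GeneralLinearGroup (Fin (α i)) K

/-- The conjugation action of `∏_i GL(α_i,K)` on `Rep(Q̄,α)`. -/
def glAct (α : Q.I → ℕ) (g : Q.Gl K α) (x : Q.Rep K α) : Q.Rep K α :=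
  fun a => (g (Q.dh a) : Matrix (Fin (α (Q.dh a))) (Fin (α (Q.dh a))) K) * x a *
    (((g (Q.dt a))⁻¹ : Matrix.GeneralLinearGroup (Fin (α (Q.dt a))) K) :
      Matrix (Fin (α (Q.dt a))) (Fin (α (Q.dt a))) K)

/-- Coordinates on `Rep(Q̄,α)`: matrix entries. -/
def Coords (α : Q.I → ℕ) : Type :=
  Σ a : Q.DA, Fin (α (Q.dh a)) × Fin (α (Q.dt a))

/-- The coordinate ring `K[V]` of a subset `V` of `Rep(Q̄,α)` : the algebra of
`K`-valued functions on `V` which are restrictions of polynomial functions. -/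
def fnRing (α : Q.I → ℕ) (V : Set (Q.Rep K α)) : Subalgebra K (↥V → K) :=
  (MvPolynomial.aeval
    (fun c : Q.Coords α => fun v : ↥V => v.1 c.1 c.2.1 c.2.2) :
    MvPolynomial (Q.Coords α) K →ₐ[K] (↥V → K)).range

end WithField

end FinQuiver

/-- The subalgebra of functions invariant under a relation (e.g. the orbit
relation of a group action). -/
def relInv (K : Type) [Field K] {V : Type} (R : V → V → Prop) :
    Subalgebra K (V → K) where
  carrier := {f | ∀ x y : V, R x y → f x = f y}
  mul_mem' := by
    intro f g hf hg x y hxy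
    simp only [Pi.mul_apply, hf x y hxy, hg x y hxy]
  one_mem' := fun x y _ => rfl
  add_mem' := by
    intro f g hf hg x y hxy
    simp only [Pi.add_apply, hf x y hxy, hg x y hxy]
  zero_mem' := fun x y _ => rfl
  algebraMap_mem' := fun c x y _ => rfl

namespace FinQuiver

variable (Q : FinQuiver) (K : Type) [Field K]

/-- The coordinate ring of the Marsden–Weinstein reduction
`N(λ,α) = μ_α^{-1}(λ) ⫽ G(α)` : the `G(α)`-invariant functions in the coordinate
ring of `μ_α^{-1}(λ)`.  Two such reductions are isomorphic as (affine) varieties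
exactly when these `K`-algebras are isomorphic. -/
def InvRing (l : Q.I → K) (α : Q.I → ℕ) :
    Subalgebra K (↥(Q.MomentFiber K l α) → K) :=
  Q.fnRing K α (Q.MomentFiber K l α) ⊓
    relInv K (fun x y : ↥(Q.MomentFiber K l α) =>
      ∃ g : Q.Gl K α, y.1 = Q.glAct K α g x.1)

/-- Index type for a product `∏_t X_t^{m_t}`. -/
@[reducible] def SymIdx (s : ℕ) (m : Fin s → ℕ) : Type := Σ t : Fin s, Fin (m t)

/-- The product `∏_{t} Rep(Q̄, d_t)^{m_t}` of representation spaces. -/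
def SymRep (s : ℕ) (m : Fin s → ℕ) (d : Fin s → (Q.I → ℕ)) : Type :=
  ∀ p : SymIdx s m, Q.Rep K (d p.1)

/-- The product `∏_t μ_{d_t}^{-1}(λ)^{m_t}` of moment map fibres. -/
def SymFiber (s : ℕ) (m : Fin s → ℕ) (d : Fin s → (Q.I → ℕ)) (l : Q.I → K) :
    Set (Q.SymRep K s m d) :=
  {x | ∀ p : SymIdx s m, x p ∈ Q.MomentFiber K l (d p.1)}

/-- Polynomial functions on the product of fibres. -/
def symFnRing (s : ℕ) (m : Fin s → ℕ) (d : Fin s → (Q.I → ℕ)) (l : Q.I → K) :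
    Subalgebra K (↥(Q.SymFiber K s m d l) → K) :=
  (MvPolynomial.aeval
    (fun c : Σ p : SymIdx s m, Q.Coords (d p.1) =>
      fun v : ↥(Q.SymFiber K s m d l) => v.1 c.1 c.2.1 c.2.2.1 c.2.2.2) :
    MvPolynomial (Σ p : SymIdx s m, Q.Coords (d p.1)) K →ₐ[K]
      (↥(Q.SymFiber K s m d l) → K)).range

/-- The componentwise action of the product of the groups `∏ GL(d_t)^{m_t}`. -/
def symGlAct (s : ℕ) (m : Fin s → ℕ) (d : Fin s → (Q.I → ℕ))
    (g : ∀ p : SymIdx s m, Q.Gl K (d p.1)) (x : Q.SymRep K s m d) :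
    Q.SymRep K s m d :=
  fun p => Q.glAct K (d p.1) (g p) (x p)

/-- The action of `∏_t S_{m_t}` permuting the factors of each `X_t^{m_t}`. -/
def symPermAct (s : ℕ) (m : Fin s → ℕ) (d : Fin s → (Q.I → ℕ))
    (π : ∀ t : Fin s, Equiv.Perm (Fin (m t))) (x : Q.SymRep K s m d) :
    Q.SymRep K s m d :=
  fun p => x ⟨p.1, π p.1 p.2⟩

/-- The coordinate ring of the product of symmetric products
`∏_t S^{m_t} N(λ, d_t)` of Marsden–Weinstein reductions: functions on
`∏_t μ_{d_t}^{-1}(λ)^{m_t}` which are polynomial, invariant under all the groups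
`G(d_t)` acting on the separate factors, and symmetric under permutations of the
`m_t` factors of each type `t`. -/
def SymInvRing (s : ℕ) (m : Fin s → ℕ) (d : Fin s → (Q.I → ℕ)) (l : Q.I → K) :
    Subalgebra K (↥(Q.SymFiber K s m d l) → K) :=
  Q.symFnRing K s m d l ⊓
    relInv K (fun x y : ↥(Q.SymFiber K s m d l) =>
      ∃ g : ∀ p : SymIdx s m, Q.Gl K (d p.1), y.1 = Q.symGlAct K s m d g x.1) ⊓
    relInv K (fun x y : ↥(Q.SymFiber K s m d l) =>
      ∃ π : ∀ t : Fin s, Equiv.Perm (Fin (m t)), y.1 = Q.symPermAct K s m d π x.1)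

/-- The trace function `tr_p` of an oriented cycle `p` in `Q̄` :
`tr_p(x) = tr(x_{a_1} ⋯ x_{a_ℓ})`, written out via matrix entries. -/
def cycTr (α : Q.I → ℕ) (p : Q.Cyc) (x : Q.Rep K α) : K :=
  ∑ c : ∀ i : Fin (p.n + 1), Fin (α (Q.dh (p.ar i))),
    ∏ i : Fin (p.n + 1),
      x (p.ar i) (c i) (Fin.cast (congrArg α (p.compat i)).symm (c (i + 1)))

/-- `U` is a subrepresentation of the `Π^λ`-module given by the point
`x ∈ Rep(Q̄,α)` : a collection of subspaces stable under all the maps `x_a`. -/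
def SubRep (α : Q.I → ℕ) (x : Q.Rep K α)
    (U : ∀ i : Q.I, Submodule K (Fin (α i) → K)) : Prop :=
  ∀ a : Q.DA, ∀ v ∈ U (Q.dt a), (x a).mulVec v ∈ U (Q.dh a)

/-- The module given by `x` has the simple module `S_{i₀}` (dimension vector
`ε_{i₀}`, all arrows acting as zero) as a composition factor: it has a subquotient
of dimension vector `ε_{i₀}` on which all arrows act as zero. -/
def HasSFactor (α : Q.I → ℕ) (i0 : Q.I) (x : Q.Rep K α) : Prop :=
  ∃ U W : ∀ i : Q.I, Submodule K (Fin (α i) → K),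
    Q.SubRep K α x U ∧ Q.SubRep K α x W ∧ (∀ i, U i ≤ W i) ∧
    (∀ i, Module.finrank K (W i) =
      Module.finrank K (U i) + (if i = i0 then 1 else 0)) ∧
    (∀ a : Q.DA, Q.dh a = i0 → Q.dt a = i0 →
      ∀ v ∈ W (Q.dt a), (x a).mulVec v ∈ U (Q.dh a))

/-- `W/U` is a simple subquotient of the module given by `x`; the simple
subquotients of a module are, up to isomorphism, exactly its composition factors. -/
def SimpleSubquot (α : Q.I → ℕ) (x : Q.Rep K α)
    (U W : ∀ i : Q.I, Submodule K (Fin (α i) → K)) : Prop :=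
  Q.SubRep K α x U ∧ Q.SubRep K α x W ∧ (∀ i, U i ≤ W i) ∧ U ≠ W ∧
    ∀ V : ∀ i : Q.I, Submodule K (Fin (α i) → K),
      Q.SubRep K α x V → (∀ i, U i ≤ V i) → (∀ i, V i ≤ W i) → V = U ∨ V = W

/-- The direct sum map `∏_{j=1}^m Rep(Q̄,δ) → Rep(Q̄,mδ)` (block diagonal). -/
def dsMap (δ : Q.I → ℕ) (m : ℕ) (y : Fin m → Q.Rep K δ) :
    Q.Rep K (fun i => m * δ i) :=
  fun a => Matrix.of fun r c =>
    if (finProdFinEquiv.symm r).1 = (finProdFinEquiv.symm c).1 then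
      y (finProdFinEquiv.symm r).1 a (finProdFinEquiv.symm r).2
        (finProdFinEquiv.symm c).2
    else 0

end FinQuiver

/-!
Reflections at vertices `i` with `λ_i ≠ 0` identify the sets `Σ_λ`, commute with multiples and
preserve `p`. If `β ∈ Σ_λ` is not a simple root and `(β, ε_i) > 0`, then `λ_i ≠ 0`, since otherwise
`β = s_i β + ε_i + ⋯ + ε_i` would violate the defining inequality of `Σ_λ`. Descending in height
thus moves `β` to the fundamental region. There the identity

  `(γ, β - γ) = ∑ i, (β, ε_i) β_i y_i (1 - y_i) - ∑ a, β_{h(a)} β_{t(a)} (y_{h(a)} - y_{t(a)})²`,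
  with `γ_i = β_i y_i`,

shows `(γ, β - γ) < 0` for `0 < γ < β`. The form takes even values on the diagonal, and truncating
a vector `γ < m β` at `β` compares `(γ, m β - γ)` with smaller multiples; together these give
`(γ, m β - γ) ≤ -2` for `0 < γ < m β` and `m ≥ 2`. Summing over the parts of a decomposition of
`m β` yields the inequality for `p`.
-/

namespace FinQuiver

variable {Q : FinQuiver}

section BilinearForm

variable (α β γ : Q.I → ℤ) (i j : Q.I)

lemma bil_eq :
    Q.bil α β = (∑ i, 2 * α i * β i) -
      ∑ a, (α (Q.h a) * β (Q.t a) + α (Q.t a) * β (Q.h a)) := by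
  simp only [bil, Fintype.sum_sum_type, Finset.sum_add_distrib]

lemma bil_comm : Q.bil α β = Q.bil β α := by
  rw [bil_eq, bil_eq]
  congr 1 <;> exact Finset.sum_congr rfl fun _ _ => by ring

variable (Q) in
/-- The symmetric form `(α, β)` as a bundled bilinear form, which gives access to the general
lemmas on linearity in each argument. -/
def bilForm : LinearMap.BilinForm ℤ (Q.I → ℤ) :=
  have add_left (α β γ) : Q.bil (α + β) γ = Q.bil α γ + Q.bil β γ := by
    simp only [bil, Pi.add_apply, mul_add, add_mul, Finset.sum_add_distrib]
    ring
  have smul_left (c : ℤ) (α β) : Q.bil (c • α) β = c • Q.bil α β := by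
    simp only [bil, Pi.smul_apply, smul_eq_mul, mul_sub, Finset.mul_sum]
    congr 1 <;> exact Finset.sum_congr rfl fun _ _ => by ring
  LinearMap.mk₂ ℤ Q.bil add_left smul_left
    (fun α β γ => by simp only [bil_comm α, add_left])
    (fun c α β => by simp only [bil_comm α, smul_left])

lemma bil_add_left : Q.bil (α + β) γ = Q.bil α γ + Q.bil β γ := Q.bilForm.map_add₂ α β γ

lemma bil_add_right : Q.bil α (β + γ) = Q.bil α β + Q.bil α γ := map_add (Q.bilForm α) β γ

lemma bil_sub_left : Q.bil (α - β) γ = Q.bil α γ - Q.bil β γ := Q.bilForm.map_sub₂ α β γ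

lemma bil_sub_right : Q.bil α (β - γ) = Q.bil α β - Q.bil α γ := map_sub (Q.bilForm α) β γ

lemma bil_zero_left : Q.bil 0 β = 0 := Q.bilForm.map_zero₂ β

lemma bil_smul_left (c : ℤ) : Q.bil (c • α) β = c * Q.bil α β := Q.bilForm.map_smul₂ c α β

lemma bil_smul_right (c : ℤ) : Q.bil α (c • β) = c * Q.bil α β := map_smul (Q.bilForm α) c β

lemma bil_nsmul_left (n : ℕ) : Q.bil (n • α) β = n * Q.bil α β := by
  rw [← natCast_zsmul, bil_smul_left]

lemma bil_nsmul_right (n : ℕ) : Q.bil α (n • β) = n * Q.bil α β := by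
  rw [← natCast_zsmul, bil_smul_right]

lemma bil_sum_left {ι : Type*} (s : Finset ι) (f : ι → Q.I → ℤ) :
    Q.bil (∑ k ∈ s, f k) β = ∑ k ∈ s, Q.bil (f k) β :=
  Q.bilForm.map_sum₂ s f β

lemma two_mul_pp : 2 * Q.pp α = 2 - Q.bil α α := by
  have diagonal : ∑ i, 2 * α i * α i = 2 * ∑ i, α i * α i := by
    simp only [Finset.mul_sum, mul_assoc]
  have arrows : ∑ a, (α (Q.h a) * α (Q.t a) + α (Q.t a) * α (Q.h a)) =
      2 * ∑ a, α (Q.t a) * α (Q.h a) := by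
    rw [Finset.mul_sum]
    exact Finset.sum_congr rfl fun _ _ => by ring
  rw [bil_eq, pp, diagonal, arrows]
  ring

lemma even_bil_self : Even (Q.bil α α) := by
  refine even_iff_two_dvd.mpr ⟨1 - Q.pp α, ?_⟩
  linarith [two_mul_pp α]

lemma ev_self : Q.ev i i = 1 := if_pos rfl

lemma ev_of_ne {i j : Q.I} (h : j ≠ i) : Q.ev i j = 0 := if_neg h

lemma ev_nonneg : 0 ≤ Q.ev i := fun j => by
  unfold ev
  split_ifs <;> simp

lemma ev_pos : 0 < Q.ev i :=
  (ev_nonneg i).lt_of_ne fun h => by simpa [ev_self] using congrFun h i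

lemma bil_ev_right :
    Q.bil α (Q.ev i) = 2 * α i -
      ∑ a, (α (Q.h a) * Q.ev i (Q.t a) + α (Q.t a) * Q.ev i (Q.h a)) := by
  rw [bil_eq]
  simp [ev]

lemma sum_bil_ev_mul {R : Type*} [CommRing R] (f : Q.I → R) :
    ∑ i, (Q.bil α (Q.ev i) : R) * f i =
      (∑ i, 2 * (α i : R) * f i) - ∑ a, (α (Q.h a) * f (Q.t a) + α (Q.t a) * f (Q.h a)) := by
  simp only [bil_ev_right, Int.cast_sub, Int.cast_mul, Int.cast_sum, Int.cast_add, sub_mul,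
    Finset.sum_sub_distrib, Finset.sum_mul]
  rw [Finset.sum_comm (s := Finset.univ (α := Q.I))]
  simp [ev, add_mul, Finset.sum_add_distrib]

lemma bil_eq_sum_bil_ev_mul : Q.bil α β = ∑ i, Q.bil α (Q.ev i) * β i := by
  simpa [bil_eq α β] using (sum_bil_ev_mul α β).symm

variable {α β γ i j}

lemma bil_ev_ev_self (hi : Q.Loopfree i) : Q.bil (Q.ev i) (Q.ev i) = 2 := by
  have no_loop (a : Q.A) : Q.ev i (Q.h a) * Q.ev i (Q.t a) = 0 := by
    simpa [ev] using fun ht hh => hi a ⟨hh, ht⟩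
  simp [bil_ev_right, ev_self, no_loop, mul_comm (Q.ev i (Q.t _))]

lemma pp_ev (hi : Q.Loopfree i) : Q.pp (Q.ev i) = 0 := by
  linarith [two_mul_pp (Q.ev i), bil_ev_ev_self hi]

lemma bil_nonpos_of_mul_eq_zero (hα : 0 ≤ α) (hβ : 0 ≤ β) (h : ∀ i, α i * β i = 0) :
    Q.bil α β ≤ 0 := by
  have arrows : 0 ≤ ∑ a, (α (Q.h a) * β (Q.t a) + α (Q.t a) * β (Q.h a)) :=
    Finset.sum_nonneg fun a _ =>
      add_nonneg (mul_nonneg (hα _) (hβ _)) (mul_nonneg (hα _) (hβ _))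
  simpa [bil_eq, mul_assoc, h] using arrows

lemma bil_ev_ev_nonpos (hij : i ≠ j) : Q.bil (Q.ev i) (Q.ev j) ≤ 0 :=
  bil_nonpos_of_mul_eq_zero (ev_nonneg i) (ev_nonneg j) fun k => by
    by_cases hk : k = i
    · rw [ev_of_ne (hk.trans_ne hij), mul_zero]
    · rw [ev_of_ne hk, zero_mul]

lemma bil_nonpos_of_antidominant (hα : ∀ i, Q.bil α (Q.ev i) ≤ 0) (hβ : 0 ≤ β) :
    Q.bil α β ≤ 0 := by
  rw [bil_eq_sum_bil_ev_mul]
  exact Finset.sum_nonpos fun i _ => mul_nonpos_of_nonpos_of_nonneg (hα i) (hβ i)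

lemma loopfree_of_bil_ev_pos (hα : 0 ≤ α) (hi : 0 < Q.bil α (Q.ev i)) : Q.Loopfree i := by
  rintro a ⟨hh, ht⟩
  have term_nonneg (b : Q.A) :
      0 ≤ α (Q.h b) * Q.ev i (Q.t b) + α (Q.t b) * Q.ev i (Q.h b) :=
    add_nonneg (mul_nonneg (hα _) (ev_nonneg i _)) (mul_nonneg (hα _) (ev_nonneg i _))
  have loop_le := Finset.single_le_sum (fun b _ => term_nonneg b) (Finset.mem_univ a)
  rw [hh, ht, ev_self] at loop_le
  rw [bil_ev_right] at hi
  linarith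

end BilinearForm

section Reflection

variable (α β : Q.I → ℤ) (i j : Q.I)

lemma refl_eq_preReflection :
    Q.refl i = Module.preReflection (Q.ev i) (Q.bilForm.flip (Q.ev i)) :=
  rfl

lemma refl_neg : Q.refl i (-α) = -Q.refl i α := by
  rw [refl_eq_preReflection, map_neg]

lemma refl_nsmul (n : ℕ) : Q.refl i (n • α) = n • Q.refl i α := by
  rw [refl_eq_preReflection, map_nsmul]

lemma refl_sum {ι : Type*} (s : Finset ι) (f : ι → Q.I → ℤ) :
    Q.refl i (∑ k ∈ s, f k) = ∑ k ∈ s, Q.refl i (f k) := by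
  simp only [refl_eq_preReflection, map_sum]

lemma bil_refl_left :
    Q.bil (Q.refl i α) β = Q.bil α β - Q.bil α (Q.ev i) * Q.bil (Q.ev i) β := by
  rw [refl, bil_sub_left, bil_smul_left]

variable (Q) in
/-- The height of a vector, the sum of its coordinates: the measure of descent under
reflections. -/
def height (α : Q.I → ℤ) : ℤ := ∑ i, α i

lemma height_refl : Q.height (Q.refl i α) = Q.height α - Q.bil α (Q.ev i) := by
  simp [height, refl, ev]

variable {α β i j}

lemma height_nonneg (hα : 0 ≤ α) : 0 ≤ Q.height α := Finset.sum_nonneg fun i _ => hα i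

lemma toNat_height_refl_lt (hα : 0 ≤ Q.refl i α) (hpos : 0 < Q.bil α (Q.ev i)) :
    (Q.height (Q.refl i α)).toNat < (Q.height α).toNat := by
  have h_nonneg := height_nonneg hα
  rw [height_refl] at h_nonneg ⊢
  lia

lemma le_refl_of_bil_nonpos (h : Q.bil α (Q.ev i) ≤ 0) : α ≤ Q.refl i α :=
  (le_sub_self_iff α).mpr (smul_nonpos_of_nonpos_of_nonneg h (ev_nonneg i))

lemma refl_of_bil_eq_zero (h : Q.bil α (Q.ev i) = 0) : Q.refl i α = α := by
  rw [refl, h, zero_smul, sub_zero]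

lemma refl_refl (hi : Q.Loopfree i) (α : Q.I → ℤ) : Q.refl i (Q.refl i α) = α := by
  rw [refl_eq_preReflection]
  exact Module.involutive_preReflection (f := Q.bilForm.flip (Q.ev i)) (bil_ev_ev_self hi) α

lemma refl_ev_self (hi : Q.Loopfree i) : Q.refl i (Q.ev i) = -Q.ev i := by
  rw [refl, bil_ev_ev_self hi]
  module

lemma bil_refl_ev_self (hi : Q.Loopfree i) (α : Q.I → ℤ) :
    Q.bil (Q.refl i α) (Q.ev i) = -Q.bil α (Q.ev i) := by
  rw [bil_refl_left, bil_ev_ev_self hi]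
  ring

lemma pp_refl (hi : Q.Loopfree i) (α : Q.I → ℤ) : Q.pp (Q.refl i α) = Q.pp α := by
  have isometry : Q.bil (Q.refl i α) (Q.refl i α) = Q.bil α α := by
    rw [bil_refl_left, bil_comm α, bil_comm (Q.ev i), bil_refl_left, bil_refl_ev_self hi,
      bil_comm (Q.ev i)]
    ring
  linarith [two_mul_pp α, two_mul_pp (Q.refl i α)]

lemma refl_comm_of_bil_eq_zero (hij : Q.bil (Q.ev i) (Q.ev j) = 0) (α : Q.I → ℤ) :
    Q.refl i (Q.refl j α) = Q.refl j (Q.refl i α) := by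
  have hji : Q.bil (Q.ev j) (Q.ev i) = 0 := by rw [bil_comm, hij]
  rw [refl, bil_refl_left, hji, refl.eq_def _ j (Q.refl i α), bil_refl_left, hij, refl, refl]
  module

lemma refl_braid (hi : Q.Loopfree i) (hj : Q.Loopfree j) (hij : Q.bil (Q.ev i) (Q.ev j) = -1)
    (α : Q.I → ℤ) :
    Q.refl i (Q.refl j (Q.refl i α)) = Q.refl j (Q.refl i (Q.refl j α)) := by
  have hji : Q.bil (Q.ev j) (Q.ev i) = -1 := by rw [bil_comm, hij]
  simp only [refl, bil_sub_left, bil_smul_left, hij, hji, bil_ev_ev_self hi, bil_ev_ev_self hj]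
  module

lemma refl_refl_ev (hi : Q.Loopfree i) (hij : Q.bil (Q.ev i) (Q.ev j) = -1) :
    Q.refl i (Q.refl j (Q.ev i)) = Q.ev j := by
  have hji : Q.bil (Q.ev j) (Q.ev i) = -1 := by rw [bil_comm, hij]
  simp only [refl, bil_sub_left, bil_smul_left, hij, hji, bil_ev_ev_self hi]
  module

end Reflection

section AscendingRoot

variable {α β γ : Q.I → ℤ} {i j : Q.I}

lemma InFund.pos (hα : Q.InFund α) : 0 < α := lt_of_le_of_ne hα.2.1 hα.1.symm

lemma bil_ev_add_bil_ev_nonpos {S : Set (Q.I → ℤ)} (hS : ∀ δ ∈ S, 0 ≤ δ)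
    (descent : ∀ δ ∈ S, ∀ k, Q.Loopfree k → 0 < Q.bil δ (Q.ev k) → δ = Q.ev k ∨ Q.refl k δ ∈ S)
    (hi : Q.Loopfree i) (hj : Q.Loopfree j) (hij : Q.bil (Q.ev i) (Q.ev j) ≤ -2)
    {δ : Q.I → ℤ} (hδ : δ ∈ S) (hpos : 0 < Q.bil δ (Q.ev i)) :
    Q.bil δ (Q.ev i) + Q.bil δ (Q.ev j) ≤ 0 := by
  induction hn : (Q.height δ).toNat using Nat.strong_induction_on generalizing δ i j with
  | _ n ih =>
    subst hn
    by_contra! hsum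
    rcases descent δ hδ i hi hpos with rfl | hrefl
    · rw [bil_ev_ev_self hi] at hsum
      linarith
    · -- `s_i δ` is a smaller counterexample, with `i` and `j` exchanged.
      have bil_refl_j : Q.bil δ (Q.ev i) < Q.bil (Q.refl i δ) (Q.ev j) := by
        rw [bil_refl_left]
        nlinarith
      have h_swap := ih _ (toNat_height_refl_lt (hS _ hrefl) hpos) hj hi (by rwa [bil_comm])
        hrefl (hpos.trans bil_refl_j) rfl
      rw [bil_refl_ev_self hi] at h_swap
      linarith

variable (Q) in
/-- The vectors obtained from a loopfree simple root or from the fundamental region by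
reflections each of which increases the height. They are exactly the positive roots, and
describe them without passing through negative roots. -/
inductive IsAscendingRoot : (Q.I → ℤ) → Prop
  | simple (i : Q.I) (hi : Q.Loopfree i) : IsAscendingRoot (Q.ev i)
  | fund (α : Q.I → ℤ) (hα : Q.InFund α) : IsAscendingRoot α
  | reflect (i : Q.I) (hi : Q.Loopfree i) (α : Q.I → ℤ) (hα : IsAscendingRoot α)
      (hneg : Q.bil α (Q.ev i) < 0) : IsAscendingRoot (Q.refl i α)

namespace IsAscendingRoot

lemma pos (hα : Q.IsAscendingRoot α) : 0 < α := by
  induction hα with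
  | simple i _ => exact ev_pos i
  | fund α hα => exact hα.pos
  | reflect i _ α _ hneg ih => exact ih.trans_le (le_refl_of_bil_nonpos hneg.le)

lemma isRoot (hα : Q.IsAscendingRoot α) : Q.IsRoot α := by
  induction hα with
  | simple i hi => exact .simple i hi
  | fund α hα => exact .fund α hα
  | reflect i hi α _ _ ih => exact .reflect i hi α ih

lemma refl_refl_of_orthogonal (hj : Q.Loopfree j) (hij : Q.bil (Q.ev i) (Q.ev j) = 0)
    (hγ : Q.IsAscendingRoot (Q.refl i γ)) (hneg : Q.bil γ (Q.ev j) < 0) :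
    Q.IsAscendingRoot (Q.refl i (Q.refl j γ)) := by
  rw [refl_comm_of_bil_eq_zero hij]
  refine .reflect j hj _ hγ ?_
  rwa [bil_refl_left, hij, mul_zero, sub_zero]

lemma refl_refl_of_braid (hi : Q.Loopfree i) (hj : Q.Loopfree j)
    (hij : Q.bil (Q.ev i) (Q.ev j) = -1) (hγ : Q.IsAscendingRoot γ)
    (hneg : Q.bil γ (Q.ev j) < 0) (hpos : 0 < Q.bil (Q.refl j γ) (Q.ev i))
    (ih : ∀ δ, Q.IsAscendingRoot δ → Q.height δ ≤ Q.height γ →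
      ∀ k, Q.Loopfree k → δ = Q.ev k ∨ Q.IsAscendingRoot (Q.refl k δ)) :
    Q.IsAscendingRoot (Q.refl i (Q.refl j γ)) := by
  have hji : Q.bil (Q.ev j) (Q.ev i) = -1 := by rw [bil_comm, hij]
  rw [bil_refl_left, hji] at hpos
  rcases ih γ hγ le_rfl i hi with rfl | hrefl_i
  · rw [refl_refl_ev hi hij]
    exact .simple j hj
  have height_le : Q.height (Q.refl i γ) ≤ Q.height γ := by
    rw [height_refl]
    linarith
  rcases ih _ hrefl_i height_le j hj with h_eq | hrefl_ji
  · have bil_i := bil_refl_ev_self hi γ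
    rw [h_eq, hji] at bil_i
    linarith
  -- Ascend from `s_j s_i γ` through `i` and `j`: the braid relation identifies the result.
  have hrefl_iji : Q.IsAscendingRoot (Q.refl i (Q.refl j (Q.refl i γ))) := by
    refine .reflect i hi _ hrefl_ji ?_
    simp only [bil_refl_left, bil_ev_ev_self hi, hij, hji]
    linarith
  have hrefl_jiji : Q.IsAscendingRoot (Q.refl j (Q.refl i (Q.refl j (Q.refl i γ)))) := by
    refine .reflect j hj _ hrefl_iji ?_
    simp only [bil_refl_left, bil_ev_ev_self hi, bil_ev_ev_self hj, hij, hji]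
    linarith
  rwa [refl_braid hi hj hij, refl_refl hj] at hrefl_jiji

lemma bil_refl_ev_nonpos_of_bil_ev_ev_le_neg_two (hi : Q.Loopfree i) (hj : Q.Loopfree j)
    (hij : Q.bil (Q.ev i) (Q.ev j) ≤ -2) (hγ : Q.IsAscendingRoot γ)
    (hneg : Q.bil γ (Q.ev j) < 0)
    (ih : ∀ δ, Q.IsAscendingRoot δ → Q.height δ ≤ Q.height γ →
      ∀ k, Q.Loopfree k → δ = Q.ev k ∨ Q.IsAscendingRoot (Q.refl k δ)) :
    Q.bil (Q.refl j γ) (Q.ev i) ≤ 0 := by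
  by_contra! hpos
  rw [bil_refl_left, bil_comm (Q.ev j)] at hpos
  have h_sum := bil_ev_add_bil_ev_nonpos
    (S := {δ | Q.IsAscendingRoot δ ∧ Q.height δ ≤ Q.height γ}) (fun δ hδ => hδ.1.pos.le)
    (fun δ hδ k hk hpos => (ih δ hδ.1 hδ.2 k hk).imp_right fun h => ⟨h, by
      rw [height_refl]
      linarith [hδ.2]⟩)
    hi hj hij ⟨hγ, le_rfl⟩ (by nlinarith)
  nlinarith

lemma refl_refl_of_bil_pos (hi : Q.Loopfree i) (hj : Q.Loopfree j) (hγ : Q.IsAscendingRoot γ)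
    (hneg : Q.bil γ (Q.ev j) < 0) (hpos : 0 < Q.bil (Q.refl j γ) (Q.ev i))
    (ih : ∀ δ, Q.IsAscendingRoot δ → Q.height δ ≤ Q.height γ →
      ∀ k, Q.Loopfree k → δ = Q.ev k ∨ Q.IsAscendingRoot (Q.refl k δ)) :
    Q.IsAscendingRoot (Q.refl i (Q.refl j γ)) := by
  obtain rfl | hne := eq_or_ne i j
  · rwa [refl_refl hi]
  have hij := bil_ev_ev_nonpos hne
  obtain h | h | h : Q.bil (Q.ev i) (Q.ev j) = 0 ∨ Q.bil (Q.ev i) (Q.ev j) = -1 ∨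
      Q.bil (Q.ev i) (Q.ev j) ≤ -2 := by lia
  · rcases ih γ hγ le_rfl i hi with rfl | hrefl
    · exact absurd h hneg.ne
    · exact refl_refl_of_orthogonal hj h hrefl hneg
  · exact refl_refl_of_braid hi hj h hγ hneg hpos ih
  · exact absurd hpos
      (bil_refl_ev_nonpos_of_bil_ev_ev_le_neg_two hi hj h hγ hneg ih).not_gt

lemma eq_ev_or_refl (hα : Q.IsAscendingRoot α) (hi : Q.Loopfree i) :
    α = Q.ev i ∨ Q.IsAscendingRoot (Q.refl i α) := by
  induction hn : (Q.height α).toNat using Nat.strong_induction_on generalizing α i with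
  | _ n ih =>
    subst hn
    rcases lt_trichotomy (Q.bil α (Q.ev i)) 0 with hneg | hzero | hpos
    · exact .inr (.reflect i hi α hα hneg)
    · exact .inr (by rwa [refl_of_bil_eq_zero hzero])
    cases hα with
    | simple j hj =>
      have hji : j = i := by_contra fun h => hpos.not_ge (bil_ev_ev_nonpos h)
      exact .inl (hji ▸ rfl)
    | fund α hα => exact absurd hpos (hα.2.2.2 i).not_gt
    | reflect j hj γ hγ hneg =>
      refine .inr (refl_refl_of_bil_pos hi hj hγ hneg hpos fun δ hδ hle k hk => ih _ ?_ hδ hk rfl)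
      rw [height_refl]
      have := height_nonneg hδ.pos.le
      lia

end IsAscendingRoot

lemma IsRoot.isAscendingRoot_or_neg (hα : Q.IsRoot α) :
    Q.IsAscendingRoot α ∨ Q.IsAscendingRoot (-α) := by
  induction hα with
  | simple i hi => exact .inl (.simple i hi)
  | fund α hα => exact .inl (.fund α hα)
  | neg_fund α hα => exact .inr (by rw [neg_neg]; exact .fund α hα)
  | reflect i hi α _ ih =>
    rcases ih with hα | hα
    · rcases hα.eq_ev_or_refl hi with rfl | hrefl
      · exact .inr (by rw [refl_ev_self hi, neg_neg]; exact .simple i hi)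
      · exact .inl hrefl
    · rcases hα.eq_ev_or_refl hi with h_eq | hrefl
      · exact .inl (by
          rw [← neg_neg α, h_eq, refl_neg, refl_ev_self hi, neg_neg]
          exact .simple i hi)
      · exact .inr (by rwa [← refl_neg])

lemma isPosRoot_iff_isAscendingRoot : Q.IsPosRoot α ↔ Q.IsAscendingRoot α := by
  refine ⟨fun ⟨hroot, hnonneg, _⟩ => ?_, fun h => ⟨h.isRoot, h.pos.le, h.pos.ne'⟩⟩
  exact hroot.isAscendingRoot_or_neg.resolve_right
    fun h => (neg_pos.mp h.pos).not_ge hnonneg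

namespace IsPosRoot

lemma pos (hα : Q.IsPosRoot α) : 0 < α := (isPosRoot_iff_isAscendingRoot.mp hα).pos

lemma refl (hα : Q.IsPosRoot α) (hi : Q.Loopfree i) (hne : α ≠ Q.ev i) :
    Q.IsPosRoot (Q.refl i α) := by
  rw [isPosRoot_iff_isAscendingRoot] at hα ⊢
  exact (hα.eq_ev_or_refl hi).resolve_left hne

lemma inFund_of_antidominant (hα : Q.IsPosRoot α) (h : ∀ i, Q.bil α (Q.ev i) ≤ 0) :
    Q.InFund α := by
  cases isPosRoot_iff_isAscendingRoot.mp hα with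
  | simple i hi => exact absurd (h i) (by rw [bil_ev_ev_self hi]; decide)
  | fund _ hα => exact hα
  | reflect i hi γ _ hneg =>
    have := h i
    rw [bil_refl_ev_self hi] at this
    linarith

end IsPosRoot

end AscendingRoot

section FundamentalRegion

variable {α β γ : Q.I → ℤ} {k m : ℕ}

lemma cast_bil_sub_eq {y : Q.I → ℚ} (hy : ∀ i, (γ i : ℚ) = β i * y i) :
    (Q.bil γ (β - γ) : ℚ) =
      (∑ i, (Q.bil β (Q.ev i) : ℚ) * (β i * (y i * (1 - y i)))) -
        ∑ a, (β (Q.h a) * β (Q.t a) : ℚ) * (y (Q.h a) - y (Q.t a)) ^ 2 := by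
  rw [sum_bil_ev_mul, bil_eq]
  push_cast [Pi.sub_apply, hy]
  rw [sub_sub, ← Finset.sum_add_distrib]
  congr 1 <;> exact Finset.sum_congr rfl fun _ _ => by ring

lemma SuppConnected.eq_of_adj {X : Type*} {f : Q.I → X} (hβ : Q.SuppConnected β)
    (hf : ∀ i j, β i ≠ 0 → β j ≠ 0 → Q.Adj i j → f i = f j)
    {i j : Q.I} (hi : β i ≠ 0) (hj : β j ≠ 0) : f i = f j := by
  induction hβ i j hi hj with
  | refl => rfl
  | tail _ h ih => exact (ih h.1).trans (hf _ _ h.1 h.2.1 h.2.2)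

lemma exists_bil_ev_ne_zero (hβ : Q.bil β β ≠ 0) : ∃ i, β i ≠ 0 ∧ Q.bil β (Q.ev i) ≠ 0 := by
  rw [bil_eq_sum_bil_ev_mul] at hβ
  obtain ⟨i, _, hi⟩ := Finset.exists_ne_zero_of_sum_ne_zero hβ
  exact ⟨i, right_ne_zero_of_mul hi, left_ne_zero_of_mul hi⟩

lemma summands_eq_zero_of_bil_sub_nonneg {y : Q.I → ℚ} (hβ : 0 ≤ β)
    (hanti : ∀ i, Q.bil β (Q.ev i) ≤ 0) (hy : ∀ i, (γ i : ℚ) = β i * y i)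
    (hy_nonneg : 0 ≤ y) (hy_le : y ≤ 1) (h : 0 ≤ Q.bil γ (β - γ)) :
    (∀ i, (Q.bil β (Q.ev i) : ℚ) * (β i * (y i * (1 - y i))) = 0) ∧
      ∀ a, (β (Q.h a) * β (Q.t a) : ℚ) * (y (Q.h a) - y (Q.t a)) ^ 2 = 0 := by
  have vertex_nonpos (i) : (Q.bil β (Q.ev i) : ℚ) * (β i * (y i * (1 - y i))) ≤ 0 :=
    mul_nonpos_of_nonpos_of_nonneg (mod_cast hanti i) <|
      mul_nonneg (mod_cast hβ i) (mul_nonneg (hy_nonneg i) (sub_nonneg.mpr (hy_le i)))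
  have arrow_nonneg (a) :
      0 ≤ (β (Q.h a) * β (Q.t a) : ℚ) * (y (Q.h a) - y (Q.t a)) ^ 2 :=
    mul_nonneg (mul_nonneg (mod_cast hβ _) (mod_cast hβ _)) (sq_nonneg _)
  have sum_nonpos := Finset.sum_nonpos fun i (_ : i ∈ Finset.univ) => vertex_nonpos i
  have sum_nonneg := Finset.sum_nonneg fun a (_ : a ∈ Finset.univ) => arrow_nonneg a
  have h_eq := cast_bil_sub_eq hy
  have h_cast : (0 : ℚ) ≤ Q.bil γ (β - γ) := mod_cast h
  constructor
  · intro i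
    exact (Finset.sum_eq_zero_iff_of_nonpos fun i _ => vertex_nonpos i).mp (by linarith) i
      (Finset.mem_univ i)
  · intro a
    exact (Finset.sum_eq_zero_iff_of_nonneg fun a _ => arrow_nonneg a).mp (by linarith) a
      (Finset.mem_univ a)

lemma sub_inf_le_nsmul_inf {ι : Type*} {β γ : ι → ℤ} (hγ : 0 ≤ γ) (hγβ : γ ≤ (k + 1) • β) :
    γ - γ ⊓ β ≤ k • (γ ⊓ β) := fun i => by
  have h := hγβ i
  rcases le_total (γ i) (β i) with hi | hi
  · simpa [hi] using mul_nonneg k.cast_nonneg (hγ i)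
  · simp only [Pi.smul_apply, Pi.sub_apply, Pi.inf_apply, nsmul_eq_mul] at h ⊢
    rw [inf_eq_right.mpr hi]
    push_cast at h
    linarith

namespace InFund

lemma bil_sub_neg (hβ : Q.InFund β) (hneg : Q.bil β β < 0) (hγ : 0 < γ) (hγβ : γ < β) :
    Q.bil γ (β - γ) < 0 := by
  obtain ⟨-, hβ_nonneg, hconn, hanti⟩ := hβ
  by_contra! h
  set y : Q.I → ℚ := fun i => γ i / β i
  have hy (i) : (γ i : ℚ) = β i * y i := by
    rcases eq_or_ne (β i) 0 with hi | hi
    · simp [hi, ((hγβ.le i).trans_eq hi).antisymm (hγ.le i)]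
    · simp only [y]
      field_simp
  have hy_nonneg : 0 ≤ y := fun i =>
    div_nonneg (Int.cast_nonneg (hγ.le i)) (Int.cast_nonneg (hβ_nonneg i))
  have hy_le : y ≤ 1 := fun i =>
    div_le_one_of_le₀ (Int.cast_le.mpr (hγβ.le i)) (Int.cast_nonneg (hβ_nonneg i))
  obtain ⟨vertex_zero, arrow_zero⟩ :=
    summands_eq_zero_of_bil_sub_nonneg hβ_nonneg hanti hy hy_nonneg hy_le h
  have y_eq_of_adj : ∀ i j, β i ≠ 0 → β j ≠ 0 → Q.Adj i j → y i = y j := by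
    rintro i j hi hj ⟨a, ⟨rfl, rfl⟩ | ⟨rfl, rfl⟩⟩ <;>
      have h_zero := arrow_zero a <;>
      simp only [mul_eq_zero, Int.cast_eq_zero, hi, hj, false_or, sq_eq_zero_iff, sub_eq_zero]
        at h_zero
    exacts [h_zero, h_zero.symm]
  obtain ⟨i, hi, hbil⟩ := exists_bil_ev_ne_zero hneg.ne
  have y_const (j) (hj : β j ≠ 0) : y j = y i := hconn.eq_of_adj y_eq_of_adj hj hi
  have h_zero := vertex_zero i
  simp only [mul_eq_zero, Int.cast_eq_zero, hi, hbil, false_or, sub_eq_zero] at h_zero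
  have γ_eq (j) : (γ j : ℚ) = β j * y i := by
    rcases eq_or_ne (β j) 0 with hj | hj
    · simp [hy, hj]
    · rw [hy, y_const j hj]
  rcases h_zero with h0 | h1
  · exact hγ.ne' (funext fun j => by simpa [h0] using γ_eq j)
  · exact hγβ.ne (funext fun j => by simpa [← h1] using γ_eq j)

lemma nsmul (hβ : Q.InFund β) (hm : m ≠ 0) : Q.InFund (m • β) := by
  obtain ⟨hne, hnonneg, hconn, hanti⟩ := hβ
  have support (i : Q.I) : (m • β) i ≠ 0 ↔ β i ≠ 0 := by simp [hm]
  refine ⟨smul_ne_zero hm hne, fun i => nsmul_nonneg (hnonneg i) m, ?_, fun i => ?_⟩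
  · simpa only [SuppConnected, support] using hconn
  · rw [bil_nsmul_left]
    exact mul_nonpos_of_nonneg_of_nonpos m.cast_nonneg (hanti i)

lemma bil_nsmul_sub_neg (hβ : Q.InFund β) (hneg : Q.bil β β < 0) (hγ : 0 < γ)
    (hγβ : γ < k • β) : Q.bil γ (k • β - γ) < 0 := by
  have hk : k ≠ 0 := by
    rintro rfl
    exact hγβ.not_ge (by simpa using hγ.le)
  refine (hβ.nsmul hk).bil_sub_neg ?_ hγ hγβ
  have : (0 : ℤ) < k := mod_cast hk.bot_lt
  rw [bil_nsmul_left, bil_nsmul_right]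
  exact mul_neg_of_pos_of_neg this (mul_neg_of_pos_of_neg this hneg)

lemma bil_succ_nsmul_sub_le_of_le_nsmul (hβ : Q.InFund β) (hneg : Q.bil β β < 0) (hγ : 0 < γ)
    (hγβ : γ ≤ k • β) : Q.bil γ ((k + 1) • β - γ) ≤ -2 := by
  have split : Q.bil γ ((k + 1) • β - γ) = Q.bil γ (k • β - γ) + Q.bil γ β := by
    rw [← bil_add_right]
    congr 1
    module
  obtain ⟨c, hc⟩ := even_bil_self β
  obtain ⟨d, hd⟩ := even_bil_self γ
  rw [split]
  rcases hγβ.eq_or_lt with rfl | hlt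
  · have hk : (1 : ℤ) ≤ k := by
      exact_mod_cast Nat.one_le_iff_ne_zero.mpr fun h => hγ.ne' (by simp [h])
    have h_le : Q.bil β β ≤ -2 := by lia
    rw [sub_self, bil_comm, bil_zero_left, bil_nsmul_left]
    nlinarith
  · have h_neg : Q.bil γ (k • β - γ) < 0 := hβ.bil_nsmul_sub_neg hneg hγ hlt
    have h_nonpos : Q.bil γ β ≤ 0 := by
      rw [bil_comm]
      exact bil_nonpos_of_antidominant hβ.2.2.2 hγ.le
    rcases h_nonpos.lt_or_eq with h_lt | h_eq
    · linarith
    · -- The remaining value `-(γ, γ)` is even.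
      rw [bil_sub_right, bil_nsmul_right, h_eq] at h_neg ⊢
      lia

lemma bil_succ_nsmul_sub_le_bil_inf (hβ : Q.InFund β) (hγ : 0 ≤ γ) (hγβ : γ ≤ (k + 1) • β) :
    Q.bil γ ((k + 1) • β - γ) ≤
      Q.bil (γ ⊓ β) (β - γ ⊓ β) + Q.bil (γ - γ ⊓ β) (k • β - (γ - γ ⊓ β)) := by
  have hkuv : 0 ≤ k • (γ ⊓ β) - (γ - γ ⊓ β) := sub_nonneg.mpr (sub_inf_le_nsmul_inf hγ hγβ)
  have disjoint : Q.bil (β - γ ⊓ β) (γ - γ ⊓ β) ≤ 0 :=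
    bil_nonpos_of_mul_eq_zero (sub_nonneg.mpr inf_le_right) (sub_nonneg.mpr inf_le_left) fun i => by
      rcases le_total (γ i) (β i) with h | h <;> simp [h]
  set u := γ ⊓ β
  set v := γ - u
  have hγ_eq : γ = u + v := (add_sub_cancel u γ).symm
  have cross : Q.bil γ ((k + 1) • β - γ) =
      Q.bil u (β - u) + Q.bil v (k • β - v) + Q.bil β (k • u - v) + 2 * Q.bil (β - u) v := by
    simp only [hγ_eq, bil_add_left, bil_sub_left, bil_sub_right, bil_add_right, bil_nsmul_left,
      bil_nsmul_right, bil_comm v, bil_comm u β]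
    push_cast
    ring
  linarith [bil_nonpos_of_antidominant hβ.2.2.2 hkuv]

lemma bil_nsmul_sub_le_neg_two (hβ : Q.InFund β) (hneg : Q.bil β β < 0) (hγ : 0 < γ)
    (hγβ : γ < m • β) (hm : 2 ≤ m) : Q.bil γ (m • β - γ) ≤ -2 := by
  obtain ⟨k, rfl⟩ : ∃ k, m = k + 1 := ⟨m - 1, by lia⟩
  by_cases hγ_le : γ ≤ β
  · exact hβ.bil_succ_nsmul_sub_le_of_le_nsmul hneg hγ
      (hγ_le.trans (le_self_nsmul hβ.2.1 (by lia)))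
  by_cases hle_γ : β ≤ γ
  · rw [bil_comm]
    have h_compl := hβ.bil_succ_nsmul_sub_le_of_le_nsmul (k := k) hneg (sub_pos.mpr hγβ)
      (by rw [succ_nsmul, sub_le_iff_le_add]; exact add_le_add_right hle_γ _)
    rwa [sub_sub_cancel] at h_compl
  have v_pos : 0 < γ - γ ⊓ β :=
    sub_pos.mpr (inf_le_left.lt_of_ne (inf_eq_left.not.mpr hγ_le))
  have v_le : γ - γ ⊓ β ≤ k • (γ ⊓ β) := sub_inf_le_nsmul_inf hγ.le hγβ.le
  have u_lt : γ ⊓ β < β := inf_le_right.lt_of_ne (inf_eq_right.not.mpr hle_γ)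
  have u_pos : 0 < γ ⊓ β := (le_inf hγ.le hβ.2.1).lt_of_ne fun h => by
    rw [← h, smul_zero] at v_le
    exact v_pos.not_ge (by rwa [← h])
  have v_lt : γ - γ ⊓ β < k • β :=
    v_le.trans_lt (nsmul_lt_nsmul_right (by lia) u_lt)
  linarith [hβ.bil_succ_nsmul_sub_le_bil_inf hγ.le hγβ.le, hβ.bil_sub_neg hneg u_pos u_lt,
    hβ.bil_nsmul_sub_neg hneg v_pos v_lt]

lemma isPosRoot (hβ : Q.InFund β) : Q.IsPosRoot β := ⟨.fund β hβ, hβ.2.1, hβ.1⟩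

end InFund

lemma sum_pp_lt_pp_sum {ι : Type*} [Fintype ι] {γ : ι → Q.I → ℤ}
    (h : ∀ j, Q.bil (γ j) (∑ k, γ k - γ j) ≤ -2) : ∑ j, Q.pp (γ j) < Q.pp (∑ j, γ j) := by
  set σ := ∑ k, γ k with hσ
  have pp_le (j : ι) : 2 * Q.pp (γ j) ≤ -Q.bil (γ j) σ := by
    have hj := h j
    rw [bil_sub_right] at hj
    linarith [two_mul_pp (γ j)]
  have sum_le : 2 * ∑ j, Q.pp (γ j) ≤ -Q.bil σ σ := by
    nth_rw 1 [hσ]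
    rw [Finset.mul_sum, bil_sum_left, ← Finset.sum_neg_distrib]
    exact Finset.sum_le_sum fun j _ => pp_le j
  linarith [two_mul_pp σ]

end FundamentalRegion

section AdmissibleReflection

variable {K : Type} [Field K] {l : Q.I → K} {α β γ : Q.I → ℤ} {i : Q.I} {m : ℕ}
  {x y : (Q.I → K) × (Q.I → ℤ)}

lemma pair_sub (l : Q.I → K) (α β : Q.I → ℤ) :
    Q.pair K l (α - β) = Q.pair K l α - Q.pair K l β := by
  simp [pair, mul_sub]

lemma pair_smul (l : Q.I → K) (c : ℤ) (α : Q.I → ℤ) :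
    Q.pair K l (c • α) = c * Q.pair K l α := by
  simp [pair, Finset.mul_sum, mul_left_comm]

lemma pair_ev (l : Q.I → K) (i : Q.I) : Q.pair K l (Q.ev i) = l i := by
  simp [pair, ev]

lemma pair_refl (l : Q.I → K) (i : Q.I) (α : Q.I → ℤ) :
    Q.pair K l (Q.refl i α) = Q.pair K l α - Q.bil α (Q.ev i) * l i := by
  rw [refl, pair_sub, pair_smul, pair_ev]

lemma pair_coRefl (l : Q.I → K) (i : Q.I) (α : Q.I → ℤ) :
    Q.pair K (Q.coRefl K i l) α = Q.pair K l (Q.refl i α) := by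
  rw [pair_refl, bil_comm, bil_eq_sum_bil_ev_mul]
  simp [pair, coRefl, sub_mul, Finset.sum_mul, mul_right_comm]

lemma coRefl_self (hi : Q.Loopfree i) (l : Q.I → K) : Q.coRefl K i l i = -l i := by
  rw [coRefl, bil_ev_ev_self hi]
  push_cast
  ring

lemma coRefl_coRefl (hi : Q.Loopfree i) (l : Q.I → K) :
    Q.coRefl K i (Q.coRefl K i l) = l := by
  funext j
  rw [coRefl, coRefl_self hi, coRefl]
  ring

lemma refl_mem_Rplus_coRefl (hi : Q.Loopfree i) (hl : l i ≠ 0) (hα : α ∈ Q.Rplus K l) :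
    Q.refl i α ∈ Q.Rplus K (Q.coRefl K i l) := by
  refine ⟨hα.1.refl hi fun h => hl ?_, ?_⟩
  · rw [← pair_ev l i, ← h]
    exact hα.2
  · rw [pair_coRefl, refl_refl hi]
    exact hα.2

namespace AdmStep

lemma symm (h : Q.AdmStep K x y) : Q.AdmStep K y x := by
  obtain ⟨i, hi, hl, hy₁, hy₂⟩ := h
  refine ⟨i, hi, ?_, ?_, ?_⟩
  · rwa [hy₁, coRefl_self hi, neg_ne_zero]
  · rw [hy₁, coRefl_coRefl hi]
  · rw [hy₂, refl_refl hi]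

lemma nsmul (h : Q.AdmStep K x y) (m : ℕ) :
    Q.AdmStep K (x.1, m • x.2) (y.1, m • y.2) := by
  obtain ⟨i, hi, hl, hy₁, hy₂⟩ := h
  exact ⟨i, hi, hl, hy₁, by rw [hy₂, refl_nsmul]⟩

lemma mem_SigmaSet (h : Q.AdmStep K x y) (hx : x.2 ∈ Q.SigmaSet K x.1) :
    y.2 ∈ Q.SigmaSet K y.1 := by
  obtain ⟨i, hi, hl, hy₁, hy₂⟩ := h
  rw [hy₁, hy₂]
  refine ⟨refl_mem_Rplus_coRefl hi hl hx.1, fun n γ hn hγ hsum => ?_⟩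
  have refl_mem (j : Fin n) : Q.refl i (γ j) ∈ Q.Rplus K x.1 := by
    rw [← coRefl_coRefl hi x.1]
    exact refl_mem_Rplus_coRefl hi (by rwa [coRefl_self hi, neg_ne_zero]) (hγ j)
  have refl_sum_eq : x.2 = ∑ j, Q.refl i (γ j) := by
    rw [← refl_sum, ← hsum, refl_refl hi]
  simpa only [pp_refl hi] using hx.2 n _ hn refl_mem refl_sum_eq

end AdmStep

namespace AdmEquiv

lemma nsmul (h : Q.AdmEquiv K x y) (m : ℕ) :
    Q.AdmEquiv K (x.1, m • x.2) (y.1, m • y.2) := by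
  induction h with
  | rel x y h => exact .rel _ _ (h.nsmul m)
  | refl x => exact .refl _
  | symm x y _ ih => exact .symm _ _ ih
  | trans x y z _ _ ih₁ ih₂ => exact .trans _ _ _ ih₁ ih₂

lemma pp_eq (h : Q.AdmEquiv K x y) : Q.pp x.2 = Q.pp y.2 := by
  induction h with
  | rel x y h =>
    obtain ⟨i, hi, -, -, hy₂⟩ := h
    rw [hy₂, pp_refl hi]
  | refl x => rfl
  | symm x y _ ih => exact ih.symm
  | trans x y z _ _ ih₁ ih₂ => exact ih₁.trans ih₂

lemma mem_SigmaSet_iff (h : Q.AdmEquiv K x y) :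
    x.2 ∈ Q.SigmaSet K x.1 ↔ y.2 ∈ Q.SigmaSet K y.1 := by
  induction h with
  | rel x y h => exact ⟨h.mem_SigmaSet, h.symm.mem_SigmaSet⟩
  | refl x => rfl
  | symm x y _ ih => exact ih.symm
  | trans x y z _ _ ih₁ ih₂ => exact ih₁.trans ih₂

end AdmEquiv

lemma ne_zero_of_mem_SigmaSet (hβ : β ∈ Q.SigmaSet K l) (hne : β ≠ Q.ev i)
    (hpos : 0 < Q.bil β (Q.ev i)) : l i ≠ 0 := by
  intro hl
  have hi := loopfree_of_bil_ev_pos hβ.1.1.2.1 hpos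
  obtain ⟨c, hc⟩ := Int.eq_ofNat_of_zero_le hpos.le
  have refl_mem : Q.refl i β ∈ Q.Rplus K l :=
    ⟨hβ.1.1.refl hi hne, by rw [pair_refl, hl, mul_zero, sub_zero]; exact hβ.1.2⟩
  have ev_mem : Q.ev i ∈ Q.Rplus K l :=
    ⟨isPosRoot_iff_isAscendingRoot.mpr (.simple i hi), by rw [pair_ev, hl]⟩
  -- In `β = s_i β + ε_i + ⋯ + ε_i` the values of `p` on the right add up to `p(β)`.
  have h_lt := hβ.2 (c + 1) (Fin.cons (Q.refl i β) fun _ => Q.ev i) (by lia)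
    (Fin.cases refl_mem fun _ => ev_mem)
    (by simp [Fin.sum_univ_succ, refl, hc])
  simp [Fin.sum_univ_succ, pp_refl hi, pp_ev hi] at h_lt

lemma exists_admEquiv_inFund (hβ : β ∈ Q.SigmaSet K l) (hpp : Q.pp β ≠ 0) :
    ∃ (ν : Q.I → K) (γ : Q.I → ℤ), Q.AdmEquiv K (l, β) (ν, γ) ∧ Q.InFund γ := by
  induction hn : (Q.height β).toNat using Nat.strong_induction_on generalizing l β with
  | _ n ih =>
    subst hn
    by_cases hanti : ∀ i, Q.bil β (Q.ev i) ≤ 0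
    · exact ⟨l, β, .refl _, hβ.1.1.inFund_of_antidominant hanti⟩
    push Not at hanti
    obtain ⟨i, hpos⟩ := hanti
    have hi := loopfree_of_bil_ev_pos hβ.1.1.2.1 hpos
    have hne : β ≠ Q.ev i := fun h => hpp (h ▸ pp_ev hi)
    have step : Q.AdmStep K (l, β) (Q.coRefl K i l, Q.refl i β) :=
      ⟨i, hi, ne_zero_of_mem_SigmaSet hβ hne hpos, rfl, rfl⟩
    have refl_mem := step.mem_SigmaSet hβ
    obtain ⟨ν, γ, hequiv, hγ⟩ := ih _ (toNat_height_refl_lt refl_mem.1.1.2.1 hpos) refl_mem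
      (by rwa [pp_refl hi]) rfl
    exact ⟨ν, γ, .trans _ _ _ (.rel _ _ step) hequiv, hγ⟩

lemma InFund.nsmul_mem_SigmaSet (hβ : Q.InFund β) (hneg : Q.bil β β < 0)
    (hl : Q.pair K l β = 0) (hm : 2 ≤ m) : m • β ∈ Q.SigmaSet K l := by
  refine ⟨⟨(hβ.nsmul (by lia)).isPosRoot, ?_⟩, fun n γ hn hγ hsum => ?_⟩
  · rw [← natCast_zsmul, pair_smul, hl, mul_zero]
  have : Nontrivial (Fin n) := Fin.nontrivial_iff_two_le.mpr hn
  have γ_lt (j : Fin n) : γ j < m • β := by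
    obtain ⟨k, hk⟩ := exists_ne j
    rw [hsum]
    exact Finset.single_lt_sum hk (Finset.mem_univ j) (Finset.mem_univ k) (hγ k).1.pos
      fun k _ _ => (hγ k).1.pos.le
  rw [hsum]
  refine sum_pp_lt_pp_sum fun j => ?_
  rw [← hsum]
  exact hβ.bil_nsmul_sub_le_neg_two hneg (hγ j).1.pos (γ_lt j) hm

end AdmissibleReflection

end FinQuiver

theorem stmt5_general (Q : FinQuiver) (K : Type) [Field K] (l : Q.I → K) (β : Q.I → ℤ)
    (hβ : β ∈ Q.SigmaSet K l) (hni : 1 < Q.pp β) (m : ℕ) (hm : 1 ≤ m) :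
    m • β ∈ Q.SigmaSet K l := by
  obtain ⟨ν, γ, hequiv, hγ⟩ := FinQuiver.exists_admEquiv_inFund hβ (by lia)
  have hγ_mem : γ ∈ Q.SigmaSet K ν := hequiv.mem_SigmaSet_iff.mp hβ
  have hneg : Q.bil γ γ < 0 := by
    have pp_eq : Q.pp β = Q.pp γ := hequiv.pp_eq
    linarith [FinQuiver.two_mul_pp γ]
  refine (hequiv.nsmul m).mem_SigmaSet_iff.mpr ?_
  obtain rfl | hm₂ := hm.eq_or_lt
  · rwa [one_nsmul]
  · exact hγ.nsmul_mem_SigmaSet hneg hγ_mem.1.2 hm₂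

/-- if `β` is a non-isotropic imaginary root (`p(β) > 1`) in `Σ_λ`,
then every positive multiple `m β` is also in `Σ_λ`. -/
theorem stmt5 (Q : FinQuiver) (K : Type) [Field K] [CharZero K] [IsAlgClosed K]
    (l : Q.I → K) (β : Q.I → ℤ)
    (hβ : β ∈ Q.SigmaSet K l) (hni : 1 < Q.pp β)
    (m : ℕ) (hm : 1 ≤ m) :
    m • β ∈ Q.SigmaSet K l :=
  stmt5_general Q K l β hβ hni m hm

end
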